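/- Let 𝕜 be a finite field of characteristic p and n ≥ 2 with p dividing n, and 𝕜 ≠ F_2 if n = 2. Let S be the submodule of scalar matrices in M₀(𝕜) and V = M₀(𝕜)/S. If φ : M₀(𝕜) → V is a homomorphism of F_p[SL_n(𝕜)]-modules, then φ(S) = 0, and the induced F_p[SL_n(𝕜)]-module map V → V is multiplication by some scalar λ ∈ 𝕜. -/

import Mathlib

/-!
The image of `t E_ij` (`i ≠ j`) under an equivariant map is fixed, modulo scalars, by all root
subgroups centralizing `E_ij`, hence is `f_ij(t) E_ij` modulo scalars
(`IsEquivariantGraph.exists_single`). Conjugating `t E_ij` by `1 + u E_ji` computes the image of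
`tu (E_jj - E_ii)` (`IsEquivariantGraph.coroot`); comparing the resulting expressions for different
factorizations of `tu`, and for `(i, j)` and `(j, i)`, gives `f_ij = f_ji` and the `𝕜`-linearity of
`f_ij`. When `n = 2` this comparison only yields `f(u²t) = u² f(t)`, but then `p = 2` and every
element of the finite field `𝕜` is a square. Conjugating `E_ij` by `1 + E_ki` shows that
`f_ij(1)` is independent of `i`, so all `f_ij` are multiplication by one scalar `c`. Since the
`t E_ij` and `t (E_jj - E_ii)` generate `M₀(𝕜)`, the map is `A ↦ c A` modulo scalars, and in
particular it kills scalar matrices.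

To avoid computing in the quotient, the map is replaced by its lifted graph, the relation
"`B` represents the image of `A`" between matrices (`IsEquivariantGraph`).
-/

set_option linter.unusedSectionVars false

section

variable (p n : ℕ) [Fact p.Prime] (𝕜 : Type) [Field 𝕜] [Fintype 𝕜] [CharP 𝕜 p]

/-- The `𝔽_p`-module structure on `𝕜` (characteristic `p`). -/
noncomputable local instance : Algebra (ZMod p) 𝕜 := ZMod.algebra 𝕜 p

/-- `M₀(𝕜)`: the trace-zero `n × n` matrices over `𝕜`, as an `𝔽_p`-submodule of the matrix
algebra. -/
noncomputable def M0 : Submodule (ZMod p) (Matrix (Fin n) (Fin n) 𝕜) :=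
  LinearMap.ker (Matrix.traceLinearMap (Fin n) (ZMod p) 𝕜)

lemma mem_M0_iff (A : Matrix (Fin n) (Fin n) 𝕜) : A ∈ M0 p n 𝕜 ↔ Matrix.trace A = 0 :=
  Iff.rfl

/-- `𝕊`: the scalar matrices inside `M₀(𝕜)`. -/
noncomputable def scalarS : Submodule (ZMod p) (M0 p n 𝕜) where
  carrier := {A | ∃ c : 𝕜, (A : Matrix (Fin n) (Fin n) 𝕜) = c • (1 : Matrix (Fin n) (Fin n) 𝕜)}
  add_mem' := by
    rintro A B ⟨c, hc⟩ ⟨d, hd⟩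
    exact ⟨c + d, by push_cast [hc, hd]; rw [add_smul]⟩
  zero_mem' := ⟨0, by simp⟩
  smul_mem' := by
    rintro z A ⟨c, hc⟩
    exact ⟨z • c, by push_cast [hc]; rw [smul_assoc]⟩

/-- Conjugation by `g ∈ SL_n(𝕜)` as an `𝔽_p`-linear endomorphism of the matrix algebra. -/
noncomputable def conjMatrix (g : Matrix.SpecialLinearGroup (Fin n) 𝕜) :
    Matrix (Fin n) (Fin n) 𝕜 →ₗ[ZMod p] Matrix (Fin n) (Fin n) 𝕜 :=
  LinearMap.mulLeft (ZMod p) (g : Matrix (Fin n) (Fin n) 𝕜) ∘ₗ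
    LinearMap.mulRight (ZMod p) ((g⁻¹ : Matrix.SpecialLinearGroup (Fin n) 𝕜) :
      Matrix (Fin n) (Fin n) 𝕜)

lemma conjMatrix_mem_M0 (g : Matrix.SpecialLinearGroup (Fin n) 𝕜) :
    ∀ A ∈ M0 p n 𝕜, conjMatrix p n 𝕜 g A ∈ M0 p n 𝕜 := by
  intro A hA
  have h1 : ((g⁻¹ : Matrix.SpecialLinearGroup (Fin n) 𝕜) : Matrix (Fin n) (Fin n) 𝕜) *
      (g : Matrix (Fin n) (Fin n) 𝕜) = 1 := by
    rw [← Matrix.SpecialLinearGroup.coe_mul, inv_mul_cancel,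
      Matrix.SpecialLinearGroup.coe_one]
  rw [mem_M0_iff] at hA ⊢
  simp only [conjMatrix, LinearMap.coe_comp, Function.comp_apply, LinearMap.mulLeft_apply,
    LinearMap.mulRight_apply]
  rw [Matrix.trace_mul_comm, mul_assoc, h1, mul_one, hA]

/-- Conjugation by `g ∈ SL_n(𝕜)` as an `𝔽_p`-linear endomorphism of `M₀(𝕜)`. -/
noncomputable def conjM0 (g : Matrix.SpecialLinearGroup (Fin n) 𝕜) :
    M0 p n 𝕜 →ₗ[ZMod p] M0 p n 𝕜 :=
  (conjMatrix p n 𝕜 g).restrict (conjMatrix_mem_M0 p n 𝕜 g)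

lemma scalarS_stable (g : Matrix.SpecialLinearGroup (Fin n) 𝕜) :
    scalarS p n 𝕜 ≤ (scalarS p n 𝕜).comap (conjM0 p n 𝕜 g) := by
  rintro A ⟨c, hc⟩
  refine ⟨c, ?_⟩
  have h1 : (g : Matrix (Fin n) (Fin n) 𝕜) *
      ((g⁻¹ : Matrix.SpecialLinearGroup (Fin n) 𝕜) : Matrix (Fin n) (Fin n) 𝕜) = 1 := by
    rw [← Matrix.SpecialLinearGroup.coe_mul, mul_inv_cancel,
      Matrix.SpecialLinearGroup.coe_one]
  simp only [conjM0, LinearMap.restrict_apply]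
  simp only [conjMatrix, LinearMap.coe_comp, Function.comp_apply, LinearMap.mulLeft_apply,
    LinearMap.mulRight_apply, hc]
  rw [Matrix.smul_mul, Matrix.one_mul, Matrix.mul_smul, h1]

/-- The scalar multiplication of `c ∈ 𝕜` on `M₀(𝕜)`. -/
noncomputable def smulM0 (c : 𝕜) (A : M0 p n 𝕜) : M0 p n 𝕜 :=
  ⟨c • (A : Matrix (Fin n) (Fin n) 𝕜), by
    rw [mem_M0_iff, Matrix.trace_smul, (mem_M0_iff p n 𝕜 _).1 A.2, smul_zero]⟩

/-! ### Graphs of equivariant maps modulo scalars -/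

section Abstract

open Matrix

variable {n : ℕ} {𝕜 : Type} [Field 𝕜]

/-- A relation between trace-zero matrices modelling the graph of an `SL_n(𝕜)`-equivariant additive
map `M₀(𝕜) → M₀(𝕜)/S`: `R A B` says that `B` represents the image of `A`. Equivariance is only
recorded for elementary transvections. -/
structure IsEquivariantGraph (R : Matrix (Fin n) (Fin n) 𝕜 → Matrix (Fin n) (Fin n) 𝕜 → Prop) :
    Prop where
  trace_right : ∀ {A B}, R A B → trace B = 0
  exists_right : ∀ {A}, trace A = 0 → ∃ B, R A B
  zero : R 0 0
  add : ∀ {A B A' B'}, R A B → R A' B' → R (A + A') (B + B')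
  sub : ∀ {A B A' B'}, R A B → R A' B' → R (A - A') (B - B')
  unique : ∀ {A B B'}, R A B → R A B' → ∃ s : 𝕜, B = B' + s • 1
  shift : ∀ {A B} (s : 𝕜), R A (B + s • 1) → R A B
  conj : ∀ {A B} (i j : Fin n) (u : 𝕜), i ≠ j → R A B →
    R ((1 + single i j u) * A * (1 - single i j u)) ((1 + single i j u) * B * (1 - single i j u))

/-! ### Images of root vectors and coroots -/

/-- If conjugation by `1 + E_kl` moves `B` by a scalar matrix, then `B` commutes with `E_kl`
(expressed entrywise), as soon as there is a third index or `B k k = B l l`. -/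
lemma commutes_of_conj_eq_add_scalar {B : Matrix (Fin n) (Fin n) 𝕜} {k l : Fin n} (hkl : k ≠ l)
    {s : 𝕜} (h : (1 + single k l 1) * B * (1 - single k l 1) = B + s • 1)
    (hc : (∃ m, m ≠ k ∧ m ≠ l) ∨ B k k = B l l) (a b : Fin n) :
    (if a = k then B l b else 0) = (if b = l then B a k else 0) := by
  have hsq : (single k l 1 : Matrix (Fin n) (Fin n) 𝕜) * single k l 1 = 0 := by
    simp [single_mul_single_of_ne, hkl.symm]
  have hinv : (1 - single k l 1 : Matrix (Fin n) (Fin n) 𝕜) * (1 + single k l 1) = 1 := by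
    rw [sub_mul, mul_add, mul_add, hsq]; simp
  have h1 : (1 + single k l 1) * B = (B + s • 1) * (1 + single k l 1) := by
    rw [← h, mul_assoc _ (1 - single k l 1), hinv, mul_one]
  have h2 : ∀ a b, (if a = k then B l b else 0) =
      (if b = l then B a k else 0) + s * ((if a = b then 1 else 0) +
        (if a = k ∧ b = l then 1 else 0)) := by
    intro a b
    have h3 : single k l 1 * B = B * single k l 1 + s • (1 + single k l 1) := by
      have := h1
      rw [add_mul, mul_add, one_mul, mul_one, add_mul, smul_mul_assoc, one_mul] at this
      have h4 : single k l 1 * B = (B + single k l 1 * B) - B := by abel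
      rw [h4, this, smul_add]; abel
    have h5 := congrFun (congrFun h3 a) b
    have e1 : (single k l 1 * B : Matrix (Fin n) (Fin n) 𝕜) a b = if a = k then B l b else 0 := by
      split_ifs with hh
      · subst hh; simp
      · exact single_mul_apply_of_ne _ _ _ _ _ hh _
    have e2 : (B * single k l 1 : Matrix (Fin n) (Fin n) 𝕜) a b = if b = l then B a k else 0 := by
      split_ifs with hh
      · subst hh; simp
      · exact mul_single_apply_of_ne _ _ _ _ _ hh _
    rw [e1, Matrix.add_apply, e2, Matrix.smul_apply, Matrix.add_apply, one_apply,
      single_apply, smul_eq_mul] at h5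
    rw [h5]
    simp only [eq_comm]
  have hs : s = 0 := by
    rcases hc with ⟨m, hmk, hml⟩ | hB
    · simpa [hmk, hml] using (h2 m m).symm
    · simpa [hkl, hB] using h2 k l
  simpa [hs] using h2 a b

variable {R : Matrix (Fin n) (Fin n) 𝕜 → Matrix (Fin n) (Fin n) 𝕜 → Prop}

/-- The image of `t E_ij` is invariant under every root subgroup `1 + 𝕜 E_kl` centralizing `E_ij`;
this forces it to be a multiple of `E_ij` modulo scalars. -/
lemma IsEquivariantGraph.exists_single (hR : IsEquivariantGraph R)
    (hc : ∀ k l B, k ≠ l → trace B = 0 → (∃ m : Fin n, m ≠ k ∧ m ≠ l) ∨ (B k k : 𝕜) = B l l)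
    {i j : Fin n} (hij : i ≠ j) (t : 𝕜) : ∃ b, R (single i j t) (single i j b) := by
  obtain ⟨B, hB⟩ := hR.exists_right (A := single i j t) (by simp [trace_single_eq_of_ne, hij])
  have key : ∀ k l, k ≠ l → k ≠ j → l ≠ i → ∀ a b,
      (if a = k then B l b else 0) = (if b = l then B a k else 0) := by
    intro k l hkl hkj hli
    have h1 := hR.conj k l 1 hkl hB
    have h2 : (1 + single k l 1) * single i j t * (1 - single k l 1) = single i j t := by
      rw [add_mul, mul_sub, add_mul, single_mul_single_of_ne _ _ _ _ hli]
      simp [single_mul_single_of_ne, hkj.symm]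
    rw [h2] at h1
    obtain ⟨s, hs⟩ := hR.unique h1 hB
    exact commutes_of_conj_eq_add_scalar hkl hs (hc k l B hkl (hR.trace_right hB))
  refine ⟨B i j, hR.shift (B j j) ?_⟩
  convert hB using 1
  ext a b
  rw [Matrix.add_apply, Matrix.smul_apply, one_apply, single_apply]
  by_cases hab : a = b
  · subst hab
    have : ¬ (i = a ∧ j = a) := fun h => hij (h.1.trans h.2.symm)
    rw [if_neg this]
    by_cases haj : a = j
    · simp [haj]
    · simpa using key a j haj haj hij.symm a j
  · by_cases hbj : b = j
    · subst hbj
      by_cases hai : a = i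
      · subst hai; simp [hab]
      · have := key i a (Ne.symm hai) hij hai i b
        simp only [if_true, Ne.symm hab, if_false] at this
        simp [hab, this, Ne.symm hai]
    · have := key b j hbj hbj hij.symm a j
      simp only [if_true, hab, if_false] at this
      simp [hab, ← this, Ne.symm hbj]

/-- The image of `tu (E_jj - E_ii)`, read off from conjugating `t E_ij` by `1 + u E_ji`. -/
lemma IsEquivariantGraph.coroot (hR : IsEquivariantGraph R) {i j : Fin n} (hij : i ≠ j)
    {t u b b' : 𝕜} (h : R (single i j t) (single i j b))
    (h' : R (single j i (t * u ^ 2)) (single j i b')) :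
    R (single j j (t * u) - single i i (t * u))
      (single j j (u * b) - single i i (u * b) + single j i (b' - u ^ 2 * b)) := by
  have hconj : ∀ x : 𝕜, (1 + single j i u) * single i j x * (1 - single j i u) =
      single i j x + (single j j (x * u) - single i i (x * u)) - single j i (x * u ^ 2) := by
    intro x
    rw [add_mul, mul_sub, add_mul, single_mul_single_same, one_mul, mul_one, mul_one, add_mul,
      single_mul_single_same, single_mul_single_same, mul_comm u x,
      show x * u * u = x * u ^ 2 by ring]
    abel
  have h1 := hR.add (hR.sub (hR.conj j i u hij.symm h) h) h'
  rw [hconj, hconj] at h1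
  convert h1 using 1
  · abel
  · have hsub : (single j i (b' - b * u ^ 2) : Matrix (Fin n) (Fin n) 𝕜) =
        single j i b' - single j i (b * u ^ 2) := by
      ext x y; simp only [single_apply, Matrix.sub_apply]; split_ifs <;> simp
    rw [mul_comm (u ^ 2) b, hsub, mul_comm u b]; abel

/-! ### Equivariant maps are homotheties -/

/-- A trace-zero matrix is a sum of multiples of `E_ij` and of `E_jj - E_ii`, `i ≠ j`. -/
lemma trace_zero_induction {P : Matrix (Fin n) (Fin n) 𝕜 → Prop} (h0 : P 0)
    (hadd : ∀ A B, P A → P B → P (A + B))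
    (hoff : ∀ i j t, i ≠ j → P (single i j t))
    (hdiag : ∀ i j t, i ≠ j → P (single j j t - single i i t))
    (o : Fin n) (A : Matrix (Fin n) (Fin n) 𝕜) (hA : trace A = 0) : P A := by
  have hsum : ∀ (s : Finset (Fin n)) (f : Fin n → Matrix (Fin n) (Fin n) 𝕜),
      (∀ i ∈ s, P (f i)) → P (∑ i ∈ s, f i) := fun s f hf =>
    Finset.sum_induction f P hadd h0 hf
  have hA' : A = ∑ i, ∑ j, (single i j (A i j) - if i = j then single o o (A i i) else 0) := by
    have h1 : (∑ i, single o o (A i i) : Matrix (Fin n) (Fin n) 𝕜) = 0 := by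
      have : (∑ i, single o o (A i i) : Matrix (Fin n) (Fin n) 𝕜) = single o o (∑ i, A i i) :=
        (map_sum (singleAddMonoidHom (α := 𝕜) o o) (fun i => A i i) Finset.univ).symm
      rw [this, show ∑ i, A i i = 0 from hA, single_zero]
    simp only [Finset.sum_sub_distrib, Finset.sum_ite_eq, Finset.mem_univ, if_true, h1, sub_zero]
    exact matrix_eq_sum_single A
  rw [hA']
  refine hsum _ _ fun i _ => hsum _ _ fun j _ => ?_
  by_cases hij : i = j
  · subst hij
    rw [if_pos rfl]
    by_cases hio : i = o
    · subst hio; simpa using h0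
    · exact hdiag o i _ (Ne.symm hio)
  · rw [if_neg hij, sub_zero]; exact hoff i j _ hij

/-- An equivariant graph is the graph of a homothety. The two cases are `n ≥ 3`, and `n = 2` over
a perfect field of characteristic `2`. -/
theorem IsEquivariantGraph.exists_scalar (hR : IsEquivariantGraph R) (hn : 2 ≤ n)
    (hc : (∀ k l : Fin n, ∃ m, m ≠ k ∧ m ≠ l) ∨
      ((∀ (k l : Fin n) (B : Matrix (Fin n) (Fin n) 𝕜), k ≠ l → trace B = 0 → B k k = B l l) ∧
        (∀ k l m : Fin n, k ≠ l → m ≠ l → k = m) ∧ ∀ x : 𝕜, ∃ y, x = y ^ 2)) :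
    ∃ c : 𝕜, ∀ A, trace A = 0 → R A (c • A) := by
  have hex : ∀ i j : Fin n, ∀ t : 𝕜, ∃ b, i ≠ j → R (single i j t) (single i j b) := by
    intro i j t
    by_cases hij : i = j
    · exact ⟨0, fun h => absurd hij h⟩
    · obtain ⟨b, hb⟩ := hR.exists_single (fun k l B hkl hB =>
        hc.imp (fun h => h k l) (fun h => h.1 k l B hkl hB)) hij t
      exact ⟨b, fun _ => hb⟩
  choose f hf using hex
  have hsymm : ∀ i j t, i ≠ j → f i j t = f j i t := by
    intro i j t hij
    have h1 := hR.coroot (u := 1) hij (hf i j t hij) (by simpa using hf j i t hij.symm)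
    have h2 := hR.coroot (u := 1) hij.symm (hf j i t hij.symm) (by simpa using hf i j t hij)
    have h3 := hR.add h1 h2
    rw [show (single j j (t * 1) - single i i (t * 1) + (single i i (t * 1) - single j j (t * 1)) :
      Matrix (Fin n) (Fin n) 𝕜) = 0 by abel] at h3
    obtain ⟨s, hs⟩ := hR.unique h3 hR.zero
    have h4 := congrFun (congrFun hs j) i
    simp [hij, hij.symm, one_apply] at h4
    linear_combination -h4
  have hcor : ∀ i j t, i ≠ j → R (single j j t - single i i t)
      (single j j (f i j t) - single i i (f i j t)) := by
    intro i j t hij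
    have h1 := hR.coroot (u := 1) hij (hf i j t hij) (by simpa using hf j i t hij.symm)
    simpa [hsymm i j t hij] using h1
  have hlin : ∀ i j t, i ≠ j → f i j t = t * f i j 1 := by
    intro i j t hij
    -- Comparing the two descriptions of the image of `u (E_jj - E_ii)`: for `n ≥ 3` the diagonal
    -- gives `f u = u f 1`, for `n = 2` only the entry `(j, i)`, which gives `f (u²) = u² f 1`.
    have cmp : ∀ u, ∃ s : 𝕜, single j j (u * f i j 1) - single i i (u * f i j 1)
        + single j i (f j i (1 * u ^ 2) - u ^ 2 * f i j 1) =
        single j j (f i j (1 * u)) - single i i (f i j (1 * u)) + s • 1 := fun u =>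
      hR.unique (hR.coroot hij (hf i j 1 hij) (hf j i (1 * u ^ 2) hij.symm))
        (hcor i j (1 * u) hij)
    rcases hc with h3 | ⟨-, -, hsq⟩
    · obtain ⟨m, hmi, hmj⟩ := h3 i j
      obtain ⟨s, hs⟩ := cmp t
      have e1 := congrFun (congrFun hs m) m
      have e2 := congrFun (congrFun hs j) j
      simp [hij, hmi.symm, hmj.symm] at e1 e2
      rw [e2, ← e1, add_zero]
    · obtain ⟨u, rfl⟩ := hsq t
      obtain ⟨s, hs⟩ := cmp u
      have e1 := congrFun (congrFun hs j) i
      simp [hij, hij.symm, one_apply] at e1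
      rw [hsymm i j _ hij]
      linear_combination e1
  have hcol : ∀ i k j, i ≠ j → k ≠ j → f i j 1 = f k j 1 := by
    intro i k j hij hkj
    by_cases hik : i = k
    · rw [hik]
    rcases hc with _ | ⟨-, h, -⟩
    · have h1 := hR.conj k i 1 (Ne.symm hik) (hf i j 1 hij)
      have hconj : ∀ x : 𝕜, (1 + single k i 1) * single i j x * (1 - single k i 1) =
          single i j x + single k j x := by
        intro x
        rw [add_mul, mul_sub, add_mul, single_mul_single_same]
        simp [add_mul, single_mul_single_of_ne, hkj.symm]
      rw [hconj, hconj] at h1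
      obtain ⟨s, hs⟩ := hR.unique h1 (hR.add (hf i j 1 hij) (hf k j 1 hkj))
      have e1 := congrFun (congrFun hs k) j
      simpa [single_apply, hik, one_apply, hkj] using e1
    · exact absurd (h i j k hij hkj) hik
  have hconst : ∃ c, ∀ i j, i ≠ j → f i j 1 = c := by
    have hother : ∀ j : Fin n, ∃ i, i ≠ j := fun j => by
      have : Nontrivial (Fin n) := Fin.nontrivial_iff_two_le.2 hn
      exact exists_ne j
    choose o ho using hother
    refine ⟨f (o ⟨0, by omega⟩) ⟨0, by omega⟩ 1, fun i j hij => ?_⟩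
    generalize (⟨0, by omega⟩ : Fin n) = z
    by_cases hjz : j = z
    · subst hjz; exact hcol _ _ _ hij (ho j)
    · rw [hcol i z j hij (Ne.symm hjz), hsymm z j 1 (Ne.symm hjz)]
      exact hcol _ _ _ hjz (ho z)
  obtain ⟨c, hc'⟩ := hconst
  have hfc : ∀ i j t, i ≠ j → f i j t = c * t := fun i j t hij => by
    rw [hlin i j t hij, hc' i j hij, mul_comm]
  refine ⟨c, trace_zero_induction (P := fun A => R A (c • A)) ?_ ?_ ?_ ?_ ⟨0, by omega⟩⟩
  · simpa using hR.zero
  · intro A B hA hB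
    rw [smul_add]; exact hR.add hA hB
  · intro i j t hij
    have := hf i j t hij
    rwa [hfc i j t hij, ← smul_eq_mul, ← smul_single] at this
  · intro i j t hij
    have := hcor i j t hij
    rwa [hfc i j t hij, ← smul_eq_mul, ← smul_single, ← smul_single, ← smul_sub] at this

end Abstract

/-! ### The map `φ` -/

/-- Let `𝕜` be a finite field of characteristic `p` with `p ∣ n`, `n ≥ 2`, `𝕜 ≠ 𝔽₂` if `n = 2`.
If `φ : M₀(𝕜) → V := M₀(𝕜)/𝕊` is a homomorphism of `𝔽_p[SL_n(𝕜)]`-modules, then `φ(𝕊) = 0`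
and the induced map `V → V` is multiplication by some scalar `c ∈ 𝕜`. -/
theorem hom_to_quotient_kills_scalars_and_is_scalar
    (hn : 2 ≤ n) (hpn : p ∣ n) (h2 : n = 2 → Fintype.card 𝕜 ≠ 2)
    (φ : M0 p n 𝕜 →ₗ[ZMod p] (M0 p n 𝕜 ⧸ scalarS p n 𝕜))
    (hφconj : ∀ (g : Matrix.SpecialLinearGroup (Fin n) 𝕜) (A : M0 p n 𝕜),
      φ (conjM0 p n 𝕜 g A) =
        Submodule.mapQ (scalarS p n 𝕜) (scalarS p n 𝕜) (conjM0 p n 𝕜 g)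
          (scalarS_stable p n 𝕜 g) (φ A)) :
    (∀ A ∈ scalarS p n 𝕜, φ A = 0) ∧
    ∃ c : 𝕜, ∀ A : M0 p n 𝕜,
      φ A = Submodule.Quotient.mk (smulM0 p n 𝕜 c A) := by
  have htr1 : ∀ s : 𝕜, Matrix.trace (s • (1 : Matrix (Fin n) (Fin n) 𝕜)) = 0 := by
    intro s
    have : (n : 𝕜) = 0 := (CharP.cast_eq_zero_iff 𝕜 p n).2 hpn
    rw [Matrix.trace_smul, Matrix.trace_one, Fintype.card_fin, this, smul_zero]
  let R : Matrix (Fin n) (Fin n) 𝕜 → Matrix (Fin n) (Fin n) 𝕜 → Prop := fun A B =>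
    ∃ (hA : A ∈ M0 p n 𝕜) (hB : B ∈ M0 p n 𝕜),
      φ ⟨A, hA⟩ = Submodule.Quotient.mk ⟨B, hB⟩
  have hR : IsEquivariantGraph R :=
    { trace_right := fun h => h.2.1
      exists_right := by
        intro A hA
        obtain ⟨B, hB⟩ := Submodule.Quotient.mk_surjective _ (φ ⟨A, hA⟩)
        exact ⟨B.1, hA, B.2, hB.symm⟩
      zero := ⟨zero_mem _, zero_mem _, (map_zero φ : _)⟩
      add := by
        rintro A B A' B' ⟨hA, hB, h⟩ ⟨hA', hB', h'⟩
        refine ⟨add_mem hA hA', add_mem hB hB', ?_⟩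
        have := map_add φ ⟨A, hA⟩ ⟨A', hA'⟩
        rw [h, h'] at this
        exact this
      sub := by
        rintro A B A' B' ⟨hA, hB, h⟩ ⟨hA', hB', h'⟩
        refine ⟨sub_mem hA hA', sub_mem hB hB', ?_⟩
        have := map_sub φ ⟨A, hA⟩ ⟨A', hA'⟩
        rw [h, h'] at this
        exact this
      unique := by
        rintro A B B' ⟨hA, hB, h⟩ ⟨_, hB', h'⟩
        obtain ⟨s, hs⟩ := (Submodule.Quotient.eq _).1 (h.symm.trans h')
        refine ⟨s, ?_⟩
        rw [← hs]
        exact (add_sub_cancel B' B).symm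
      shift := by
        rintro A B s ⟨hA, hB, h⟩
        have hB' : B ∈ M0 p n 𝕜 := by
          have := (mem_M0_iff p n 𝕜 _).1 hB
          rwa [Matrix.trace_add, htr1, add_zero] at this
        refine ⟨hA, hB', h.trans ((Submodule.Quotient.eq _).2 ⟨s, ?_⟩)⟩
        exact add_sub_cancel_left B _
      conj := by
        rintro A B i j u hij ⟨hA, hB, h⟩
        let g : Matrix.SpecialLinearGroup (Fin n) 𝕜 :=
          ⟨1 + Matrix.single i j u, Matrix.det_transvection_of_ne i j hij u⟩
        have hmul : (1 - Matrix.single i j u : Matrix (Fin n) (Fin n) 𝕜) *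
            (1 + Matrix.single i j u) = 1 := by
          rw [sub_mul, mul_add, mul_add, Matrix.single_mul_single_of_ne _ _ _ _ hij.symm]
          simp
        have hg : ((g⁻¹ : Matrix.SpecialLinearGroup (Fin n) 𝕜) : Matrix (Fin n) (Fin n) 𝕜) =
            1 - Matrix.single i j u := by
          have h1 : (g : Matrix (Fin n) (Fin n) 𝕜) *
              ((g⁻¹ : Matrix.SpecialLinearGroup (Fin n) 𝕜) : Matrix (Fin n) (Fin n) 𝕜) = 1 := by
            rw [← Matrix.SpecialLinearGroup.coe_mul, mul_inv_cancel,
              Matrix.SpecialLinearGroup.coe_one]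
          exact (left_inv_eq_right_inv hmul h1).symm
        have hval : ∀ X, conjMatrix p n 𝕜 g X =
            (1 + Matrix.single i j u) * X * (1 - Matrix.single i j u) := by
          intro X
          rw [mul_assoc, ← hg]
          rfl
        have hmem := conjMatrix_mem_M0 p n 𝕜 g
        have h2 := hφconj g ⟨A, hA⟩
        rw [h] at h2
        have h3 : ∃ (hA' : conjMatrix p n 𝕜 g A ∈ M0 p n 𝕜)
            (hB' : conjMatrix p n 𝕜 g B ∈ M0 p n 𝕜),
            φ ⟨_, hA'⟩ = Submodule.Quotient.mk ⟨_, hB'⟩ := ⟨hmem A hA, hmem B hB, h2⟩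
        rw [hval, hval] at h3
        exact h3 }
  have hcase : (∀ k l : Fin n, ∃ m, m ≠ k ∧ m ≠ l) ∨
      ((∀ (k l : Fin n) (B : Matrix (Fin n) (Fin n) 𝕜), k ≠ l → Matrix.trace B = 0 →
          B k k = B l l) ∧
        (∀ k l m : Fin n, k ≠ l → m ≠ l → k = m) ∧ ∀ x : 𝕜, ∃ y, x = y ^ 2) := by
    rcases Nat.lt_or_ge 2 n with h3 | h3
    · left
      intro k l
      have hcard : ({k, l} : Finset (Fin n)).card < Fintype.card (Fin n) := by
        rw [Fintype.card_fin]
        exact Finset.card_le_two.trans_lt h3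
      obtain ⟨m, hm⟩ := Finset.exists_mem_notMem_of_card_lt_card
        (s := {k, l}) (t := Finset.univ) (by simpa using hcard)
      exact ⟨m, by simpa using hm.2⟩
    · right
      obtain rfl : n = 2 := le_antisymm h3 hn
      obtain rfl : p = 2 := (Nat.prime_dvd_prime_iff_eq Fact.out Nat.prime_two).1 hpn
      refine ⟨fun k l B hkl hB => ?_, by decide, fun x => ?_⟩
      · have h01 : B 0 0 = B 1 1 := by
          rw [Matrix.trace_fin_two] at hB
          exact CharTwo.add_eq_zero.1 hB
        fin_cases k <;> fin_cases l <;> simp_all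
      · obtain ⟨y, hy⟩ := FiniteField.isSquare_of_char_two (ringChar.eq 𝕜 2) x
        exact ⟨y, by rw [hy, sq]⟩
  obtain ⟨c, hc⟩ := hR.exists_scalar hn hcase
  have hmain : ∀ A : M0 p n 𝕜, φ A = Submodule.Quotient.mk (smulM0 p n 𝕜 c A) := by
    intro A
    obtain ⟨_, _, h⟩ := hc A.1 A.2
    exact h
  refine ⟨fun A hA => ?_, c, hmain⟩
  obtain ⟨d, hd⟩ := hA
  rw [hmain A, Submodule.Quotient.mk_eq_zero]
  refine ⟨c * d, ?_⟩
  change c • (A : Matrix (Fin n) (Fin n) 𝕜) = _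
  rw [hd, smul_smul]

end
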